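/- arXiv:2003.11270 — 2 statements merged into one kernel-verified Lean document; each statement's English description precedes it below -/
import Mathlib

section
/- Let k ≥ 2 and let E₁, …, E_{3k-2} be non-empty edge subsets of a graph such that ν(E_i ∪ E_j) ≥ k for every i ≠ j. Then E = ⋃ E_i contains a rainbow matching of size k, i.e., a matching e₁, …, e_k with e_t ∈ E_{i_t} for distinct indices i₁, …, i_k. -/
attribute [local instance] Classical.propDecidable

/-- A matching: a finite set of non-loop edges that are pairwise vertex-disjoint. -/
def IsMatching {V : Type} (M : Finset (Sym2 V)) : Prop :=
  (∀ e ∈ M, ¬ e.IsDiag) ∧ ∀ e ∈ M, ∀ f ∈ M, e ≠ f → ∀ v, v ∈ e → v ∉ f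

/-- The matching number of a finite edge set: the maximum size of a matching contained in it. -/
noncomputable def nu {V : Type} (E : Finset (Sym2 V)) : ℕ :=
  (E.powerset.filter fun M => IsMatching M).sup Finset.card

section RainbowHelpers

variable {V : Type}

/-- The finite set of vertices covered by an edge set. -/
noncomputable def cov (M : Finset (Sym2 V)) : Finset V := M.biUnion Sym2.toFinset

theorem mem_cov {M : Finset (Sym2 V)} {v : V} : v ∈ cov M ↔ ∃ e ∈ M, v ∈ e := by
  simp [cov]

theorem mem_cov_of {M : Finset (Sym2 V)} {x y : V} (h : s(x, y) ∈ M) : x ∈ cov M ∧ y ∈ cov M :=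
  ⟨mem_cov.2 ⟨_, h, by simp⟩, mem_cov.2 ⟨_, h, by simp⟩⟩

theorem cov_mono {M N : Finset (Sym2 V)} (h : M ⊆ N) {v : V} (hv : v ∈ cov M) : v ∈ cov N := by
  obtain ⟨e, he, hv⟩ := mem_cov.1 hv
  exact mem_cov.2 ⟨e, h he, hv⟩

theorem IsMatching.mono {M N : Finset (Sym2 V)} (hN : IsMatching N) (h : M ⊆ N) : IsMatching M :=
  ⟨fun e he => hN.1 e (h he), fun e he f hf => hN.2 e (h he) f (h hf)⟩

theorem isMatching_empty : IsMatching (∅ : Finset (Sym2 V)) := by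
  simp [IsMatching]

theorem cov_empty {v : V} : v ∉ cov (∅ : Finset (Sym2 V)) := by simp [cov]

theorem cov_insert {M : Finset (Sym2 V)} {x y v : V} :
    v ∈ cov (insert s(x, y) M) ↔ v = x ∨ v = y ∨ v ∈ cov M := by
  simp only [mem_cov, Finset.mem_insert, exists_eq_or_imp, Sym2.mem_iff, or_assoc]

theorem IsMatching.union {M N : Finset (Sym2 V)} (hM : IsMatching M) (hN : IsMatching N)
    (hd : ∀ v, v ∈ cov M → v ∉ cov N) : IsMatching (M ∪ N) := by
  refine ⟨fun e he => ?_, fun e he f hf hef v hve hvf => ?_⟩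
  · rcases Finset.mem_union.1 he with h | h
    · exact hM.1 e h
    · exact hN.1 e h
  · rcases Finset.mem_union.1 he with h | h <;> rcases Finset.mem_union.1 hf with h' | h'
    · exact hM.2 e h f h' hef v hve hvf
    · exact hd v (mem_cov.2 ⟨e, h, hve⟩) (mem_cov.2 ⟨f, h', hvf⟩)
    · exact hd v (mem_cov.2 ⟨f, h', hvf⟩) (mem_cov.2 ⟨e, h, hve⟩)
    · exact hN.2 e h f h' hef v hve hvf

theorem cov_union {M N : Finset (Sym2 V)} {v : V} : v ∈ cov (M ∪ N) ↔ v ∈ cov M ∨ v ∈ cov N := by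
  simp only [mem_cov, Finset.mem_union, or_and_right, exists_or]

theorem IsMatching.insert {M : Finset (Sym2 V)} (hM : IsMatching M) {x y : V} (hxy : x ≠ y)
    (hx : x ∉ cov M) (hy : y ∉ cov M) :
    IsMatching (insert s(x, y) M) ∧ (insert s(x, y) M).card = M.card + 1 := by
  constructor
  · have h1 : IsMatching ({s(x, y)} : Finset (Sym2 V)) := by
      simp [IsMatching, hxy]
    rw [Finset.insert_eq]
    refine h1.union hM ?_
    intro v hv
    rw [← insert_empty_eq, cov_insert] at hv
    rcases hv with rfl | rfl | hv
    · exact hx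
    · exact hy
    · exact absurd hv cov_empty
  · exact Finset.card_insert_of_notMem fun h => hx (mem_cov_of h).1

theorem IsMatching.sdiff_cov {M S : Finset (Sym2 V)} (hM : IsMatching M) (hS : S ⊆ M) {v : V} :
    v ∈ cov (M \ S) ↔ v ∈ cov M ∧ v ∉ cov S := by
  constructor
  · intro h
    obtain ⟨e, he, hv⟩ := mem_cov.1 h
    rw [Finset.mem_sdiff] at he
    refine ⟨mem_cov.2 ⟨e, he.1, hv⟩, fun h' => ?_⟩
    obtain ⟨f, hf, hv'⟩ := mem_cov.1 h'
    exact hM.2 e he.1 f (hS hf) (fun h => he.2 (h ▸ hf)) v hv hv'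
  · rintro ⟨h, h'⟩
    obtain ⟨e, he, hv⟩ := mem_cov.1 h
    exact mem_cov.2 ⟨e, Finset.mem_sdiff.2 ⟨he, fun h => h' (mem_cov.2 ⟨e, h, hv⟩)⟩, hv⟩

theorem IsMatching.erase {M : Finset (Sym2 V)} (hM : IsMatching M) {x y : V} (h : s(x, y) ∈ M) :
    IsMatching (M.erase s(x, y)) ∧ (M.erase s(x, y)).card + 1 = M.card ∧
      ∀ v, v ∈ cov (M.erase s(x, y)) ↔ v ∈ cov M ∧ v ≠ x ∧ v ≠ y := by
  refine ⟨hM.mono (Finset.erase_subset _ _), Finset.card_erase_add_one h, fun v => ?_⟩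
  rw [Finset.erase_eq, hM.sdiff_cov (by simpa using h), ← insert_empty_eq, cov_insert]
  have := @cov_empty V v
  tauto

theorem IsMatching.mate {M : Finset (Sym2 V)} (hM : IsMatching M) {x : V} (h : x ∈ cov M) :
    ∃ y, s(x, y) ∈ M ∧ x ≠ y := by
  obtain ⟨e, he, hx⟩ := mem_cov.1 h
  obtain ⟨y, rfl⟩ := hx
  exact ⟨y, he, by simpa using hM.1 _ he⟩

theorem IsMatching.mate_unique {M : Finset (Sym2 V)} (hM : IsMatching M) {x y z : V}
    (h : s(x, y) ∈ M) (h' : s(x, z) ∈ M) : y = z := by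
  by_contra hne
  exact hM.2 _ h _ h' (by simp; grind) x (by simp) (by simp)

theorem IsMatching.card_cov {M : Finset (Sym2 V)} (hM : IsMatching M) :
    (cov M).card = 2 * M.card := by
  unfold cov
  rw [Finset.card_biUnion]
  · rw [Finset.sum_congr rfl (g := fun _ => 2)]
    · simp [mul_comm]
    · intro e he
      exact Sym2.card_toFinset_of_not_isDiag e (hM.1 e he)
  · intro e he f hf hef
    change Disjoint _ _
    rw [Finset.disjoint_left]
    intro v hv hv'
    exact hM.2 e he f hf hef v (by simpa using hv) (by simpa using hv')

/-- Even alternating paths from `b` to `a`, with first class `S`, second class `F`, vertices `W`. -/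
inductive Alt : V → V → Finset (Sym2 V) → Finset (Sym2 V) → Finset V → Prop
  | nil (a : V) : Alt a a ∅ ∅ {a}
  | cons (b c x a : V) (S F : Finset (Sym2 V)) (W : Finset V) (h : Alt x a S F W)
      (hb : b ∉ W) (hc : c ∉ W) (hbc : b ≠ c) :
      Alt b a (insert s(b, c) S) (insert s(c, x) F) (insert b (insert c W))

theorem Alt.facts {b a : V} {S F : Finset (Sym2 V)} {W : Finset V} (h : Alt b a S F W) :
    a ∈ W ∧ b ∈ W ∧ (∀ v, v ∈ cov S ↔ v ∈ W ∧ v ≠ a) ∧ (∀ v, v ∈ cov F ↔ v ∈ W ∧ v ≠ b) ∧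
      W.card = 2 * F.card + 1 ∧ IsMatching S := by
  induction h with
  | nil a => simp [cov_empty, isMatching_empty]
  | cons b c x a S F W h hb hc hbc ih =>
    obtain ⟨h1, h2, h3, h4, h5, h6⟩ := ih
    have hcF : s(c, x) ∉ F := fun h => by
      have := (mem_cov_of h).1
      rw [h4] at this
      exact hc this.1
    refine ⟨by simp [h1], by simp, fun v => ?_, fun v => ?_, ?_, ?_⟩
    · rw [cov_insert, h3]; grind
    · rw [cov_insert, h4]; grind
    · rw [Finset.card_insert_of_notMem (by grind), Finset.card_insert_of_notMem hc,
        Finset.card_insert_of_notMem hcF]; omega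
    · exact (h6.insert hbc (by grind) (by grind)).1

theorem Alt.rot {b a : V} {S F : Finset (Sym2 V)} {W : Finset V} (h : Alt b a S F W) :
    ∀ y ∈ W, (∃ R ⊆ S ∪ F, IsMatching R ∧ ∀ v, v ∈ cov R ↔ v ∈ W ∧ v ≠ y) ∨
      (y ≠ a ∧ y ≠ b ∧
        ∃ R ⊆ S ∪ F, IsMatching R ∧ ∀ v, v ∈ cov R ↔ v ∈ W ∧ v ≠ y ∧ v ≠ a ∧ v ≠ b) := by
  induction h with
  | nil a =>
    intro y hy
    left
    refine ⟨∅, by simp, isMatching_empty, fun v => ?_⟩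
    have := @cov_empty V v
    grind
  | cons b c x a S F W h hb hc hbc ih =>
    obtain ⟨h1, h2, h3, h4, h5, h6⟩ := h.facts
    have hcx : c ≠ x := fun h => hc (h ▸ h2)
    have key : ∀ R : Finset (Sym2 V), R ⊆ S ∪ F → ∀ e, (e = s(b, c) ∨ e = s(c, x)) →
        insert e R ⊆ insert s(b, c) S ∪ insert s(c, x) F := by
      intro R hR e he f hf
      have := @hR f
      grind
    intro y hy
    by_cases hyb : y = b
    · subst hyb
      left
      rcases ih x h2 with ⟨R, hR, hm, hcv⟩ | ⟨_, h, _⟩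
      · refine ⟨insert s(c, x) R, key R hR _ (Or.inr rfl),
          (hm.insert hcx (by grind) (by grind)).1, fun v => ?_⟩
        rw [cov_insert, hcv]; grind
      · exact absurd rfl h
    by_cases hyc : y = c
    · subst hyc
      right
      refine ⟨by grind, hyb, S, by grind, h6, fun v => ?_⟩
      rw [h3]; grind
    have hyW : y ∈ W := by grind
    rcases ih y hyW with ⟨R, hR, hm, hcv⟩ | ⟨hya, hyx, R, hR, hm, hcv⟩
    · left
      refine ⟨insert s(b, c) R, key R hR _ (Or.inl rfl),
          (hm.insert hbc (by grind) (by grind)).1, fun v => ?_⟩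
      rw [cov_insert, hcv]; grind
    · by_cases hxa : x = a
      · subst hxa
        -- then the path is trivial
        exfalso
        cases h with
        | nil => grind
        | cons b' c' x' a' S' F' W' h' hb' hc' hbc' => exact hb' h'.facts.1
      right
      refine ⟨hya, hyb, insert s(c, x) R, key R hR _ (Or.inr rfl),
          (hm.insert hcx (by grind) (by grind)).1, fun v => ?_⟩
      rw [cov_insert, hcv]; grind

set_option maxHeartbeats 2000000 in
/-- The exchange lemma along the alternating path starting at `b`. -/
theorem exch : ∀ (n : ℕ) (M N : Finset (Sym2 V)) (b : V), M.card = n → IsMatching M →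
    IsMatching N → b ∈ cov M → b ∉ cov N →
    ∃ a M' N', a ≠ b ∧ M' ⊆ M ∪ N ∧ N' ⊆ M ∪ N ∧ IsMatching M' ∧ IsMatching N' ∧
      (∀ r : V → V → Prop, Equivalence r → (∀ x y, s(x, y) ∈ M ∪ N → r x y) → r b a) ∧
      ((a ∉ cov M ∧ a ∈ cov N ∧ M'.card = M.card ∧ N'.card = N.card ∧
          (∀ v, v ∈ cov M' ↔ v = a ∨ (v ∈ cov M ∧ v ≠ b)) ∧
          (∀ v, v ∈ cov N' ↔ v = b ∨ (v ∈ cov N ∧ v ≠ a)) ∧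
          ∃ S F W, S ⊆ M ∧ F ⊆ N ∧ Alt b a S F W) ∨
        (a ∈ cov M ∧ a ∉ cov N ∧ M'.card + 1 = M.card ∧ N'.card = N.card + 1 ∧
          (∀ v, v ∈ cov M' ↔ v ∈ cov M ∧ v ≠ a ∧ v ≠ b) ∧
          (∀ v, v ∈ cov N' ↔ v = a ∨ v = b ∨ v ∈ cov N))) := by
  intro n
  induction n using Nat.strong_induction_on with
  | _ n ih =>
  intro M N b hn hM hN hbM hbN
  obtain ⟨c, hbc, hne⟩ := hM.mate hbM
  obtain ⟨hM1, hM1c, hM1v⟩ := hM.erase hbc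
  have hcM : c ∈ cov M := (mem_cov_of hbc).2
  set M1 := M.erase s(b, c) with hM1def
  have hM1s : M1 ⊆ M := Finset.erase_subset _ _
  by_cases hcN : c ∈ cov N
  swap
  · obtain ⟨h1, h2⟩ := hN.insert hne hbN hcN
    refine ⟨c, M1, insert s(b, c) N, hne.symm, by grind, by grind, hM1, h1,
      fun r hr hE => hE _ _ (by grind), Or.inr ⟨hcM, hcN, hM1c, h2, ?_, ?_⟩⟩
    · intro v; rw [hM1v]; tauto
    · intro v; rw [cov_insert]; tauto
  obtain ⟨x, hcx, hcxne⟩ := hN.mate hcN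
  have hxN : x ∈ cov N := (mem_cov_of hcx).2
  have hxb : x ≠ b := fun h => hbN (h ▸ hxN)
  obtain ⟨hN1, hN1c, hN1v⟩ := hN.erase hcx
  set N1 := N.erase s(c, x) with hN1def
  have hN1s : N1 ⊆ N := Finset.erase_subset _ _
  by_cases hxM : x ∈ cov M
  swap
  · obtain ⟨h1, h2⟩ := hM1.insert hcxne (by grind) (by grind)
    obtain ⟨h3, h4⟩ := hN1.insert hne (by grind) (by grind)
    refine ⟨x, insert s(c, x) M1, insert s(b, c) N1, hxb, by grind, by grind, h1, h3,
      fun r hr hE => hr.trans (hE b c (by grind)) (hE c x (by grind)),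
      Or.inl ⟨hxM, hxN, by omega, by omega, ?_, ?_, ?_⟩⟩
    · intro v; rw [cov_insert, hM1v]; grind
    · intro v; rw [cov_insert, hN1v]; grind
    · exact ⟨_, _, _, by grind, by grind,
        Alt.cons b c x x ∅ ∅ {x} (Alt.nil x) (by grind) (by grind) hne⟩
  obtain ⟨a, M', N', hab, hM', hN', hMm, hNm, hr, hcase⟩ :=
    ih M1.card (by omega) M1 N1 x rfl hM1 hN1 (by grind) (by grind)
  have hsub : M1 ∪ N1 ⊆ M ∪ N := Finset.union_subset_union hM1s hN1s
  have hMs : insert s(c, x) M' ⊆ M ∪ N :=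
    Finset.insert_subset (by grind) (hM'.trans hsub)
  have hNs : insert s(b, c) N' ⊆ M ∪ N :=
    Finset.insert_subset (by grind) (hN'.trans hsub)
  have hR : ∀ r : V → V → Prop, Equivalence r → (∀ x y, s(x, y) ∈ M ∪ N → r x y) → r b a :=
    fun r hr' hE => hr'.trans (hE b c (by grind)) (hr'.trans (hE c x (by grind))
      (hr r hr' fun p q hpq => hE p q (hsub hpq)))
  rcases hcase with ⟨h1, h2, h3, h4, h5, h6, S, F, W, hS, hF, hA⟩ | ⟨h1, h2, h3, h4, h5, h6⟩
  · obtain ⟨g1, g2⟩ := hMm.insert hcxne (by grind) (by grind)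
    obtain ⟨g3, g4⟩ := hNm.insert hne (by grind) (by grind)
    refine ⟨a, insert s(c, x) M', insert s(b, c) N', by grind, hMs, hNs, g1, g3, hR,
      Or.inl ⟨by grind, by grind, by omega, by omega, ?_, ?_, ?_⟩⟩
    · intro v; rw [cov_insert, h5, hM1v]; grind
    · intro v; rw [cov_insert, h6, hN1v]; grind
    · have hfac := hA.facts
      have hnW : ∀ v, v ∉ cov N1 → v ≠ x → v ∉ W := by
        intro v hv hvx hvW
        exact hv (cov_mono hF ((hfac.2.2.2.1 v).2 ⟨hvW, hvx⟩))
      exact ⟨_, _, _, Finset.insert_subset hbc (hS.trans hM1s),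
        Finset.insert_subset hcx (hF.trans hN1s),
        Alt.cons b c x a S F W hA (hnW b (by grind) hxb.symm) (hnW c (by grind) hcxne) hne⟩
  · obtain ⟨g1, g2⟩ := hMm.insert hcxne (by grind) (by grind)
    obtain ⟨g3, g4⟩ := hNm.insert hne (by grind) (by grind)
    refine ⟨a, insert s(c, x) M', insert s(b, c) N', by grind, hMs, hNs, g1, g3, hR,
      Or.inr ⟨by grind, by grind, by omega, by omega, ?_, ?_⟩⟩
    · intro v; rw [cov_insert, h5, hM1v]; grind
    · intro v; rw [cov_insert, h6, hN1v]; grind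

/-- `v` is missed by some matching of size `m` in `H`. -/
def Miss (H : Finset (Sym2 V)) (m : ℕ) (v : V) : Prop :=
  ∃ M ⊆ H, IsMatching M ∧ M.card = m ∧ v ∉ cov M

/-- all matchings in `H` have size at most `m`. -/
def NuLe (H : Finset (Sym2 V)) (m : ℕ) : Prop :=
  ∀ M ⊆ H, IsMatching M → M.card ≤ m

theorem Miss.mono {H G : Finset (Sym2 V)} (h : H ⊆ G) {m : ℕ} {v : V} (hv : Miss H m v) :
    Miss G m v := by
  obtain ⟨M, hM, h'⟩ := hv
  exact ⟨M, hM.trans h, h'⟩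

/-- Two vertices missed simultaneously. -/
def Miss2 (H : Finset (Sym2 V)) (m : ℕ) (u v : V) : Prop :=
  ∃ M ⊆ H, IsMatching M ∧ M.card = m ∧ u ∉ cov M ∧ v ∉ cov M

theorem gallai {H : Finset (Sym2 V)} {m : ℕ} (hnu : NuLe H m) {u v w : V} (hv : Miss H m v)
    (huw : Miss2 H m u w) (hne : u ≠ w) : Miss2 H m u v ∨ Miss2 H m v w := by
  obtain ⟨M, hMH, hM, hMc, hu, hw⟩ := huw
  obtain ⟨N, hNH, hN, hNc, hv⟩ := hv
  by_cases hvM : v ∈ cov M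
  swap
  · exact Or.inl ⟨M, hMH, hM, hMc, hu, hvM⟩
  have hsub : M ∪ N ⊆ H := Finset.union_subset hMH hNH
  obtain ⟨a, M', N', hab, hM', hN', hMm, hNm, -, hcase⟩ := exch _ M N v rfl hM hN hvM hv
  rcases hcase with ⟨h1, h2, h3, h4, h5, h6, -⟩ | ⟨h1, h2, h3, h4, h5, h6⟩
  · by_cases hau : a = u
    · exact Or.inr ⟨M', hM'.trans hsub, hMm, by omega, by grind, by grind⟩
    · exact Or.inl ⟨M', hM'.trans hsub, hMm, by omega, by grind, by grind⟩
  · have := hnu N' (hN'.trans hsub) hNm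
    omega

/-- Stability lemma. -/
theorem stability {H : Finset (Sym2 V)} {m : ℕ} {a d x : V} (hd : Miss H (m + 1) d)
    (ha : ¬ Miss H (m + 1) a) (had : s(a, d) ∈ H) (hxa : x ≠ a)
    (hx : Miss (H.filter fun e => a ∉ e) m x) : Miss H (m + 1) x := by
  by_contra hxD
  obtain ⟨M, hMH, hM, hMc, hdM⟩ := hd
  obtain ⟨N, hNH, hN, hNc, hxN⟩ := hx
  have hNH' : N ⊆ H := hNH.trans (Finset.filter_subset _ _)
  have haN : a ∉ cov N := by
    intro h
    obtain ⟨e, he, hae⟩ := mem_cov.1 h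
    exact (Finset.mem_filter.1 (hNH he)).2 hae
  have hxM : x ∈ cov M := by
    by_contra h
    exact hxD ⟨M, hMH, hM, hMc, h⟩
  have haM : a ∈ cov M := by
    by_contra h
    exact ha ⟨M, hMH, hM, hMc, h⟩
  have hsub : M ∪ N ⊆ H := Finset.union_subset hMH hNH'
  obtain ⟨z, M', N', hab, hM', hN', hMm, hNm, -, hcase⟩ := exch _ M N x rfl hM hN hxM hxN
  rcases hcase with ⟨h1, h2, h3, h4, h5, h6, -⟩ | ⟨h1, h2, h3, h4, h5, h6⟩
  · exact hxD ⟨M', hM'.trans hsub, hMm, by omega, by grind⟩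
  · by_cases hza : z = a
    · obtain ⟨g1, g2⟩ := hMm.insert (x := a) (y := d) (by grind) (by grind) (by grind)
      refine hxD ⟨_, Finset.insert_subset had (hM'.trans hsub), g1, by omega, ?_⟩
      rw [cov_insert]; grind
    · exact ha ⟨N', hN'.trans hsub, hNm, by omega, by grind⟩

/-- If a matching is larger than `M`, some two vertices missed by `M` are connected. -/
theorem connected_missed {G M : Finset (Sym2 V)} (hMG : M ⊆ G) (hM : IsMatching M)
    (r : V → V → Prop) (hr : Equivalence r) (hE : ∀ x y, s(x, y) ∈ G → r x y) :
    ∀ (n : ℕ) (N : Finset (Sym2 V)), N ⊆ G → IsMatching N → M.card < N.card →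
      (cov N \ cov M).card = n → ∃ x y, x ≠ y ∧ x ∉ cov M ∧ y ∉ cov M ∧ r x y := by
  intro n
  induction n using Nat.strong_induction_on with
  | _ n ih =>
  intro N hNG hN hlt hn
  have h1 := hM.card_cov
  have h2 := hN.card_cov
  obtain ⟨b, hbN, hbM⟩ : ∃ b ∈ cov N, b ∉ cov M := by
    by_contra! h
    have := Finset.card_le_card (show cov N ⊆ cov M from h)
    omega
  obtain ⟨a, N', M', hab, hN', hM', hNm, hMm, hR, hcase⟩ := exch _ N M b rfl hN hM hbN hbM
  have hsub : N ∪ M ⊆ G := Finset.union_subset hNG hMG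
  rcases hcase with ⟨h1, h2, h3, h4, h5, h6, -⟩ | ⟨h1, h2, h3, h4, h5, h6⟩
  · refine ih (cov N' \ cov M).card ?_ N' (hN'.trans hsub) hNm (by omega) rfl
    rw [← hn]
    apply Finset.card_lt_card
    rw [Finset.ssubset_iff_of_subset]
    · exact ⟨b, by grind, by grind⟩
    · intro v hv
      grind
  · exact ⟨b, a, hab.symm, hbM, h2, hR r hr fun x y h => hE x y (hsub h)⟩

/-- remove the edge at `a` from a matching -/
theorem delete_vertex {H M : Finset (Sym2 V)} (hMH : M ⊆ H) (hM : IsMatching M) (a : V) :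
    ∃ M' ⊆ H.filter (fun e => a ∉ e), IsMatching M' ∧ M.card ≤ M'.card + 1 ∧
      M'.card ≤ M.card ∧ (a ∈ cov M → M'.card + 1 = M.card) ∧ M' ⊆ M := by
  by_cases ha : a ∈ cov M
  · obtain ⟨y, hy, -⟩ := hM.mate ha
    obtain ⟨h1, h2, h3⟩ := hM.erase hy
    refine ⟨M.erase s(a, y), ?_, h1, by omega, by omega, fun _ => h2, Finset.erase_subset _ _⟩
    intro e he
    refine Finset.mem_filter.2 ⟨hMH (Finset.erase_subset _ _ he), fun hae => ?_⟩
    have := (h3 a).1 (mem_cov.2 ⟨e, he, hae⟩)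
    exact this.2.1 rfl
  · refine ⟨M, ?_, hM, by omega, le_rfl, fun h => absurd h ha, subset_rfl⟩
    intro e he
    exact Finset.mem_filter.2 ⟨hMH he, fun hae => ha (mem_cov.2 ⟨e, he, hae⟩)⟩

/-- Closure lemma: if no edge of `U` enlarges the set of missable vertices or the matching number,
then adding all of `U` does not enlarge the matching number. -/
theorem closure_lemma : ∀ (m : ℕ) (H U : Finset (Sym2 V)),
    (∀ e ∈ H ∪ U, ¬ e.IsDiag) → NuLe H m → (∃ M ⊆ H, IsMatching M ∧ M.card = m) →
    (∀ f ∈ U, NuLe (insert f H) m) →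
    (∀ f ∈ U, ∀ v, Miss (insert f H) m v → Miss H m v) → NuLe (H ∪ U) m := by
  intro m
  induction m using Nat.strong_induction_on with
  | _ m ih =>
  intro H U hdiag hH hex hU hD
  by_cases hA : ∃ a d, s(a, d) ∈ H ∧ Miss H m d ∧ ¬ Miss H m a
  · obtain ⟨a, d, had, hd, ha⟩ := hA
    cases m with
    | zero =>
      exfalso
      exact ha ⟨∅, by simp, isMatching_empty, rfl, cov_empty⟩
    | succ m =>
    have hcovA : ∀ M ⊆ H, IsMatching M → M.card = m + 1 → a ∈ cov M := by
      intro M hM h1 h2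
      by_contra h
      exact ha ⟨M, hM, h1, h2, h⟩
    have hmiss_a : ∀ (G : Finset (Sym2 V)), ∀ M ⊆ G.filter (fun e => a ∉ e), a ∉ cov M := by
      intro G M hM h
      obtain ⟨e, he, hae⟩ := mem_cov.1 h
      exact (Finset.mem_filter.1 (hM he)).2 hae
    have hins : ∀ f, a ∉ f → insert f (H.filter fun e => a ∉ e) =
        (insert f H).filter fun e => a ∉ e := by
      intro f hf
      ext e
      simp only [Finset.mem_insert, Finset.mem_filter]
      grind
    have hstep : NuLe ((H.filter fun e => a ∉ e) ∪ (U.filter fun e => a ∉ e)) m := by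
      apply ih m (by omega)
      · intro e he
        exact hdiag e (by grind)
      · intro M hM hm
        by_contra hlt
        have h1 := hH M (hM.trans (Finset.filter_subset _ _)) hm
        exact hmiss_a H M hM (hcovA M (hM.trans (Finset.filter_subset _ _)) hm (by omega))
      · obtain ⟨M, hM, hm, hc⟩ := hex
        obtain ⟨M', g1, g2, g3, g4, g5, g6⟩ := delete_vertex hM hm a
        exact ⟨M', g1, g2, by have := g5 (hcovA M hM hm hc); omega⟩
      · intro f hf M hM hm
        obtain ⟨hfU, hfa⟩ := Finset.mem_filter.1 hf
        rw [hins f hfa] at hM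
        have h1 := hU f hfU M (hM.trans (Finset.filter_subset _ _)) hm
        by_contra hlt
        exact ha (hD f hfU a ⟨M, hM.trans (Finset.filter_subset _ _), hm, by omega,
          hmiss_a _ M hM⟩)
      · intro f hf v hv
        obtain ⟨hfU, hfa⟩ := Finset.mem_filter.1 hf
        have key : ∀ w, Miss H (m + 1) w → Miss (H.filter fun e => a ∉ e) m w := by
          rintro w ⟨M, hM, hm, hc, hw⟩
          obtain ⟨M', g1, g2, g3, g4, g5, g6⟩ := delete_vertex hM hm a
          exact ⟨M', g1, g2, by have := g5 (hcovA M hM hm hc); omega,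
            fun h => hw (cov_mono g6 h)⟩
        by_cases hva : v = a
        · subst hva
          obtain ⟨M, hM, hm, hc, hw⟩ := key d hd
          exact ⟨M, hM, hm, hc, hmiss_a _ M hM⟩
        · rw [hins f hfa] at hv
          exact key v (hD f hfU v (stability (hd.mono (Finset.subset_insert _ _))
            (fun h => ha (hD f hfU a h)) (Finset.mem_insert_of_mem had) hva hv))
    intro N hN hNm
    obtain ⟨N', g1, g2, g3, g4, g5, g6⟩ := delete_vertex hN hNm a
    rw [Finset.filter_union] at g1
    have := hstep N' g1 g2
    omega
  · push Not at hA
    have hedge : ∀ x y, s(x, y) ∈ H ∪ U → Miss H m x → Miss H m y := by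
      intro x y hxy hx
      rcases Finset.mem_union.1 hxy with h | h
      · exact hA y x (by rwa [Sym2.eq_swap]) hx
      · by_contra hy
        obtain ⟨M, hM, hm, hc, hxM⟩ := hx
        have hyM : y ∈ cov M := by
          by_contra h'
          exact hy ⟨M, hM, hm, hc, h'⟩
        obtain ⟨c, hyc, hne⟩ := hm.mate hyM
        obtain ⟨g1, g2, g3⟩ := hm.erase hyc
        have hxy' : x ≠ y := by simpa using hdiag _ hxy
        obtain ⟨g4, g5⟩ := g1.insert hxy' (by grind) (by grind)
        have hcM := (mem_cov_of hyc).2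
        have hcD : Miss (insert s(x, y) H) m c := by
          refine ⟨_, Finset.insert_subset_insert _ ((Finset.erase_subset _ _).trans hM), g4,
            by omega, ?_⟩
          rw [cov_insert, g3]
          grind
        exact hy (hA y c (hM hyc) (hD _ h c hcD))
    have hno : ∀ x y, s(x, y) ∈ H ∪ U → ¬ Miss2 H m x y := by
      rintro x y hxy ⟨M, hM, hm, hc, hx, hy⟩
      have hxy' : x ≠ y := by simpa using hdiag _ hxy
      obtain ⟨g4, g5⟩ := hm.insert hxy' hx hy
      rcases Finset.mem_union.1 hxy with h | h
      · have := hH _ (Finset.insert_subset h hM) g4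
        omega
      · have := hU _ h _ (Finset.insert_subset_insert _ hM) g4
        omega
    have hsymm : ∀ x y, Miss2 H m x y → Miss2 H m y x := by
      rintro x y ⟨M, hM, hm, hc, hx, hy⟩
      exact ⟨M, hM, hm, hc, hy, hx⟩
    let r : V → V → Prop := fun x y =>
      (Miss H m x ↔ Miss H m y) ∧ (x = y ∨ ¬ Miss2 H m x y)
    have hr : Equivalence r := by
      refine ⟨fun x => ⟨Iff.rfl, Or.inl rfl⟩, ?_, ?_⟩
      · rintro x y ⟨h1, h2⟩
        exact ⟨h1.symm, h2.imp Eq.symm fun h h' => h (hsymm _ _ h')⟩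
      · rintro x y z ⟨h1, h2⟩ ⟨h3, h4⟩
        refine ⟨h1.trans h3, ?_⟩
        by_cases hxz : x = z
        · exact Or.inl hxz
        right
        intro h
        have hx : Miss H m x := by
          obtain ⟨M, hM, hm, hc, hx, hy⟩ := h
          exact ⟨M, hM, hm, hc, hx⟩
        rcases h2 with rfl | h2
        · rcases h4 with rfl | h4
          · exact hxz rfl
          · exact h4 h
        · rcases h4 with rfl | h4
          · exact h2 h
          · rcases gallai hH (h1.1 hx) h hxz with h | h
            · exact h2 h
            · exact h4 h
    intro N hN hNm
    by_contra hlt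
    obtain ⟨M, hM, hm, hc⟩ := hex
    obtain ⟨x, y, hxy, hx, hy, -, hrr⟩ := connected_missed (hM.trans Finset.subset_union_left) hm r hr
      (fun x y hxy => ⟨⟨hedge x y hxy, hedge y x (by rwa [Sym2.eq_swap])⟩, Or.inr (hno x y hxy)⟩)
      _ N hN hNm (by omega) rfl
    rcases hrr with h | h
    · exact hxy h
    · exact h ⟨M, hM, hm, hc, hx, hy⟩

/-- The number of vertices in `X` that are not missable. -/
noncomputable def defi (X : Finset V) (H : Finset (Sym2 V)) (m : ℕ) : ℕ :=
  (X.filter fun v => ¬ Miss H m v).card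

/-- Triangle lemma. -/
theorem triangle {G : Finset (Sym2 V)} {X : Finset V} {m : ℕ} (hG : NuLe G m)
    (hB : ∀ H' ⊆ G, (∃ M ⊆ H', IsMatching M ∧ M.card = m) → 3 * m ≤ H'.card + defi X H' m)
    {M N : Finset (Sym2 V)} (hMG : M ⊆ G) (hNG : N ⊆ G) (hM : IsMatching M) (hN : IsMatching N)
    (hMc : M.card = m) (hNc : N.card = m) {a b c : V} (ha : a ∉ cov M) (hb : b ∉ cov N)
    (hab : s(a, b) ∈ G) (hne : a ≠ b) (hbc : s(b, c) ∈ M) : s(a, c) ∈ N := by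
  have hsub : M ∪ N ⊆ G := Finset.union_subset hMG hNG
  obtain ⟨z, M', N', hzb, hM', hN', hMm, hNm, -, hcase⟩ :=
    exch _ M N b rfl hM hN (mem_cov_of hbc).1 hb
  rcases hcase with ⟨h1, h2, h3, h4, h5, h6, S, F, W, hS, hF, hA⟩ | ⟨h1, h2, h3, h4, h5, h6⟩
  swap
  · have := hG N' (hN'.trans hsub) hNm
    omega
  have hza : z = a := by
    by_contra hza
    obtain ⟨g1, g2⟩ := hMm.insert hne (by grind) (by grind)
    have := hG _ (Finset.insert_subset hab (hM'.trans hsub)) g1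
    omega
  subst hza
  obtain ⟨f1, f2, f3, f4, f5, f6⟩ := hA.facts
  by_cases ht : 2 ≤ F.card
  · exfalso
    have hMH : M ⊆ insert s(z, b) (M ∪ F) := by grind
    have hWM : ∀ v ∈ W, v ≠ z → v ∈ cov M := fun v hv hvz =>
      cov_mono hS ((f3 v).2 ⟨hv, hvz⟩)
    have hWc : (W.erase z).card = 2 * F.card := by
      rw [Finset.card_erase_of_mem f1]; omega
    have hMcov := hM.card_cov
    have hsd : (cov M \ W.erase z).card + 2 * F.card = 2 * m := by
      rw [← hWc, Finset.card_sdiff_add_card_eq_card (by intro v hv; grind), hMcov, hMc]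
    have hrot : ∀ y ∈ W, ∃ R ⊆ insert s(z, b) (S ∪ F), IsMatching R ∧
        ∀ v, v ∈ cov R ↔ v ∈ W ∧ v ≠ y := by
      intro y hy
      rcases hA.rot y hy with ⟨R, hR, hm, hcv⟩ | ⟨hyz, hyb, R, hR, hm, hcv⟩
      · exact ⟨R, hR.trans (Finset.subset_insert _ _), hm, hcv⟩
      · refine ⟨insert s(z, b) R, Finset.insert_subset_insert _ hR,
          (hm.insert hne (by grind) (by grind)).1, fun v => ?_⟩
        rw [cov_insert, hcv]; grind
    have hmiss : ∀ y ∈ W, Miss (insert s(z, b) (M ∪ F)) m y := by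
      intro y hy
      obtain ⟨R, hR, hRm, hRc⟩ := hrot y hy
      have hdc : ∀ v, v ∈ cov (M \ S) ↔ v ∈ cov M ∧ v ∉ cov S := fun v => hM.sdiff_cov hS
      have hu : IsMatching (R ∪ (M \ S)) := by
        refine hRm.union (hM.mono Finset.sdiff_subset) ?_
        intro v hv
        grind
      have hucov : cov (R ∪ (M \ S)) = (cov M \ W.erase z) ∪ W.erase y := by
        ext v
        rw [cov_union]
        grind
      have hcard : (cov (R ∪ (M \ S))).card = 2 * m := by
        rw [hucov, Finset.card_union_of_disjoint, Finset.card_erase_of_mem hy]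
        · omega
        · rw [Finset.disjoint_left]
          intro v hv
          grind
      rw [hu.card_cov] at hcard
      refine ⟨R ∪ (M \ S), ?_, hu, by omega, ?_⟩
      · intro e he
        have := @hR e
        have := @hS e
        grind
      · rw [hucov]
        grind
    have hdef : defi X (insert s(z, b) (M ∪ F)) m ≤ (cov M \ W.erase z).card := by
      apply Finset.card_le_card
      intro v hv
      obtain ⟨-, hv⟩ := Finset.mem_filter.1 hv
      have h1 : v ∈ cov M := by
        by_contra h
        exact hv ⟨M, hMH, hM, hMc, h⟩
      have h2 : v ∉ W := fun h => hv (hmiss v h)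
      grind
    have hcardH : (insert s(z, b) (M ∪ F)).card ≤ m + F.card + 1 := by
      refine (Finset.card_insert_le _ _).trans ?_
      have := Finset.card_union_le M F
      omega
    have := hB (insert s(z, b) (M ∪ F)) (Finset.insert_subset hab
      (Finset.union_subset hMG (hF.trans hNG))) ⟨M, hMH, hM, hMc⟩
    omega
  · cases hA with
    | nil => exact absurd rfl hne
    | cons b c' x a S F W h hb' hc' hbc' =>
      cases h with
      | nil =>
        have hcc : c = c' := hM.mate_unique hbc (hS (by simp))
        subst hcc
        rw [Sym2.eq_swap]
        exact hF (by simp)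
      | cons b2 c2 x2 a2 S2 F2 W2 h2 hb2 hc2 hbc2 =>
        exfalso
        apply ht
        have hfac := h2.facts
        have hn1 : s(c2, x2) ∉ F2 := fun h => hc2 ((hfac.2.2.2.1 c2).1 (mem_cov_of h).1).1
        have hn2 : s(c', x) ∉ insert s(c2, x2) F2 := by
          intro h
          have h3 := (mem_cov_of h).1
          rw [cov_insert, hfac.2.2.2.1] at h3
          have := hfac.2.1
          grind
        rw [Finset.card_insert_of_notMem hn2, Finset.card_insert_of_notMem hn1]
        omega

/-- `H` consists of one edge from each colour in `C`. -/
def Sel {ι : Type} (E : ι → Finset (Sym2 V)) (C : Finset ι) (H : Finset (Sym2 V)) : Prop :=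
  ∃ e : ι → Sym2 V, (∀ c ∈ C, e c ∈ E c) ∧ H = C.image e

theorem Sel.sub {ι : Type} {E : ι → Finset (Sym2 V)} {C : Finset ι} {H H' : Finset (Sym2 V)}
    (h : Sel E C H) (hs : H' ⊆ H) : ∃ C' ⊆ C, C'.card = H'.card ∧ Sel E C' H' := by
  obtain ⟨e, he, rfl⟩ := h
  have hch : ∀ f ∈ H', ∃ c ∈ C, e c = f := fun f hf => Finset.mem_image.1 (hs hf)
  rcases H'.eq_empty_or_nonempty with rfl | ⟨f0, hf0⟩
  · exact ⟨∅, by simp, by simp, e, by simp, by simp⟩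
  obtain ⟨c0, -, -⟩ := hch f0 hf0
  have : Nonempty ι := ⟨c0⟩
  choose! g hg using hch
  refine ⟨H'.image g, ?_, ?_, e, ?_, ?_⟩
  · intro c hc
    obtain ⟨f, hf, rfl⟩ := Finset.mem_image.1 hc
    exact (hg f hf).1
  · apply Finset.card_image_of_injOn
    intro f hf f' hf' h
    rw [← (hg f hf).2, ← (hg f' hf').2, h]
  · intro c hc
    obtain ⟨f, hf, rfl⟩ := Finset.mem_image.1 hc
    exact he _ (hg f hf).1
  · rw [Finset.image_image]
    ext f
    simp only [Finset.mem_image, Function.comp]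
    constructor
    · intro hf
      exact ⟨f, hf, (hg f hf).2⟩
    · rintro ⟨f', hf', rfl⟩
      rwa [(hg f' hf').2]

theorem Sel.add {ι : Type} {E : ι → Finset (Sym2 V)} {C : Finset ι} {H : Finset (Sym2 V)}
    (h : Sel E C H) {c : ι} (hc : c ∉ C) {f : Sym2 V} (hf : f ∈ E c) :
    Sel E (insert c C) (insert f H) := by
  obtain ⟨e, he, rfl⟩ := h
  refine ⟨Function.update e c f, ?_, ?_⟩
  · intro d hd
    by_cases hdc : d = c
    · subst hdc; simpa using hf
    · rw [Function.update_of_ne hdc]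
      exact he d (by grind)
  · rw [Finset.image_insert]
    congr 1
    · simp
    · apply Finset.image_congr
      intro d hd
      have : d ≠ c := fun h => hc (h ▸ hd)
      simp [Function.update_of_ne this]

theorem rainbow_aux {ι : Type} [Fintype ι] (E : ι → Finset (Sym2 V))
    (hne : ∀ i, (E i).Nonempty) (hsimple : ∀ i, ∀ e ∈ E i, ¬ e.IsDiag) :
    ∀ k : ℕ, 3 * k ≤ Fintype.card ι + 2 →
      (∀ i j, i ≠ j → ∃ N ⊆ E i ∪ E j, IsMatching N ∧ k ≤ N.card) →
      ∃ C M, Sel E C M ∧ IsMatching M ∧ M.card = k ∧ C.card = k := by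
  intro k
  induction k with
  | zero =>
    intro _ _
    exact ⟨∅, ∅, ⟨fun i => (hne i).choose, by simp, by simp⟩, isMatching_empty, rfl, rfl⟩
  | succ m ih =>
  intro hcard hnu
  obtain ⟨C0, M0, hS0, hM0, hM0c, hC0⟩ := ih (by omega) fun i j hij => by
    obtain ⟨N, h1, h2, h3⟩ := hnu i j hij
    exact ⟨N, h1, h2, by omega⟩
  by_contra hcon
  have hNR : ∀ C H, Sel E C H → NuLe H m := by
    intro C H hS M hMH hM
    by_contra hlt
    obtain ⟨M', hM', hc'⟩ := Finset.exists_subset_card_eq (show m + 1 ≤ M.card by omega)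
    obtain ⟨C', -, hC', hS'⟩ := hS.sub (hM'.trans hMH)
    exact hcon ⟨C', M', hS', hM.mono hM', hc', by omega⟩
  have hSE : ∀ C H, Sel E C H → ∀ f ∈ H, ∃ c ∈ C, f ∈ E c := by
    rintro C H ⟨e, he, rfl⟩ f hf
    obtain ⟨c, hc, rfl⟩ := Finset.mem_image.1 hf
    exact ⟨c, hc, he c hc⟩
  set X : Finset V := Finset.univ.biUnion fun i => cov (E i) with hX
  have hXE : ∀ i, ∀ v ∈ cov (E i), v ∈ X := by
    intro i v hv
    exact Finset.mem_biUnion.2 ⟨i, Finset.mem_univ i, hv⟩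
  have hXS : ∀ C H, Sel E C H → ∀ v ∈ cov H, v ∈ X := by
    intro C H hS v hv
    obtain ⟨f, hf, hvf⟩ := mem_cov.1 hv
    obtain ⟨c, -, hc⟩ := hSE C H hS f hf
    exact hXE c v (mem_cov.2 ⟨f, hc, hvf⟩)
  have hgrow : ∀ C H, Sel E C H → (∃ M ⊆ H, IsMatching M ∧ M.card = m) →
      C.card + 2 ≤ Fintype.card ι →
      ∃ c, c ∉ C ∧ ∃ f ∈ E c, defi X (insert f H) m < defi X H m := by
    intro C H hS hex hC
    by_contra! hno
    have h2 : 1 < (Finset.univ \ C).card := by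
      have := Finset.card_sdiff_add_card_eq_card (Finset.subset_univ C)
      rw [Finset.card_univ] at this
      omega
    obtain ⟨i, hi, j, hj, hij⟩ := Finset.one_lt_card.1 h2
    have hi' : i ∉ C := (Finset.mem_sdiff.1 hi).2
    have hj' : j ∉ C := (Finset.mem_sdiff.1 hj).2
    have hcol : ∀ f ∈ E i ∪ E j, ∃ c, c ∉ C ∧ f ∈ E c := by
      intro f hf
      rcases Finset.mem_union.1 hf with h | h
      · exact ⟨i, hi', h⟩
      · exact ⟨j, hj', h⟩
    have hcl : NuLe (H ∪ (E i ∪ E j)) m := by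
      apply closure_lemma m H (E i ∪ E j) _ (hNR C H hS) hex
      · intro f hf
        obtain ⟨c, hc, hfc⟩ := hcol f hf
        exact hNR _ _ (hS.add hc hfc)
      · intro f hf v hv
        obtain ⟨c, hc, hfc⟩ := hcol f hf
        by_contra hvH
        by_cases hvX : v ∈ X
        · have h1 := hno c hc f hfc
          have h2 : defi X (insert f H) m < defi X H m := by
            apply Finset.card_lt_card
            rw [Finset.ssubset_iff_of_subset]
            · exact ⟨v, Finset.mem_filter.2 ⟨hvX, hvH⟩, fun h => (Finset.mem_filter.1 h).2 hv⟩
            · intro w hw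
              obtain ⟨hw1, hw2⟩ := Finset.mem_filter.1 hw
              exact Finset.mem_filter.2 ⟨hw1, fun h => hw2 (h.mono (Finset.subset_insert _ _))⟩
          omega
        · obtain ⟨M, hM, hm, hmc⟩ := hex
          exact hvH ⟨M, hM, hm, hmc, fun h => hvX (hXS C H hS v (cov_mono hM h))⟩
      · intro e he
        rcases Finset.mem_union.1 he with h | h
        · obtain ⟨c, -, hc⟩ := hSE C H hS e h
          exact hsimple c e hc
        · obtain ⟨c, -, hc⟩ := hcol e h
          exact hsimple c e hc
    obtain ⟨N, h1, h2, h3⟩ := hnu i j hij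
    have := hcl N (h1.trans Finset.subset_union_right) h2
    omega
  have hexmono : ∀ (H : Finset (Sym2 V)) (f : Sym2 V), (∃ M ⊆ H, IsMatching M ∧ M.card = m) →
      ∃ M ⊆ insert f H, IsMatching M ∧ M.card = m := by
    rintro H f ⟨M, hM, h⟩
    exact ⟨M, hM.trans (Finset.subset_insert _ _), h⟩
  have hnosave : ∀ n C H, Sel E C H → (∃ M ⊆ H, IsMatching M ∧ M.card = m) →
      defi X H m = n → C.card + n + 1 ≤ 3 * m → False := by
    intro n
    induction n using Nat.strong_induction_on with
    | _ n ihn =>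
    intro C H hS hex hn hle
    obtain ⟨c, hc, f, hf, hlt⟩ := hgrow C H hS hex (by omega)
    refine ihn _ (by omega) (insert c C) (insert f H) (hS.add hc hf) (hexmono H f hex) rfl ?_
    rw [Finset.card_insert_of_notMem hc]
    omega
  have hrun : ∀ n C H, Sel E C H → (∃ M ⊆ H, IsMatching M ∧ M.card = m) →
      defi X H m = n → C.card + n ≤ 3 * m →
      ∃ C' H', Sel E C' H' ∧ (∃ M ⊆ H', IsMatching M ∧ M.card = m) ∧
        defi X H' m = 0 ∧ C'.card ≤ 3 * m := by
    intro n
    induction n using Nat.strong_induction_on with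
    | _ n ihn =>
    intro C H hS hex hn hle
    by_cases hn0 : n = 0
    · exact ⟨C, H, hS, hex, by omega, by omega⟩
    obtain ⟨c, hc, f, hf, hlt⟩ := hgrow C H hS hex (by omega)
    refine ihn _ (by omega) (insert c C) (insert f H) (hS.add hc hf) (hexmono H f hex) rfl ?_
    rw [Finset.card_insert_of_notMem hc]
    omega
  have hd0 : defi X M0 m ≤ 2 * m := by
    rw [← hM0c, ← hM0.card_cov, hM0c]
    apply Finset.card_le_card
    intro v hv
    by_contra h
    exact (Finset.mem_filter.1 hv).2 ⟨M0, subset_rfl, hM0, hM0c, h⟩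
  obtain ⟨C, H, hS, hex, hdef, hCc⟩ := hrun _ C0 M0 hS0 ⟨M0, subset_rfl, hM0, hM0c⟩ rfl (by omega)
  have hmissX : ∀ v ∈ X, Miss H m v := by
    intro v hv
    by_contra h
    have : v ∈ X.filter fun v => ¬ Miss H m v := Finset.mem_filter.2 ⟨hv, h⟩
    rw [Finset.card_eq_zero.1 hdef] at this
    simp at this
  have hclaim : ∀ C' A, Sel E C' H → A ∉ C' → E A ⊆ H := by
    intro C' A hS' hA f hf
    by_contra hfH
    have hSG := hS'.add hA hf
    have hBG : ∀ H' ⊆ insert f H, (∃ M ⊆ H', IsMatching M ∧ M.card = m) →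
        3 * m ≤ H'.card + defi X H' m := by
      intro H' hH' hex'
      by_contra hlt
      obtain ⟨C'', -, hC'', hS''⟩ := hSG.sub hH'
      exact hnosave _ C'' H' hS'' hex' rfl (by omega)
    have hnG := hNR _ _ hSG
    have hHG : H ⊆ insert f H := Finset.subset_insert _ _
    have hfG : f ∈ insert f H := Finset.mem_insert_self _ _
    have hfd := hsimple A f hf
    induction f using Sym2.ind with
    | _ a b =>
    have hab : a ≠ b := by simpa using hfd
    obtain ⟨haX, hbX⟩ := mem_cov_of hf
    obtain ⟨M, hMH, hM, hMc, haM⟩ := hmissX a (hXE _ _ haX)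
    obtain ⟨N, hNH, hN, hNc, hbN⟩ := hmissX b (hXE _ _ hbX)
    have hbM : b ∈ cov M := by
      by_contra hbM
      obtain ⟨g1, g2⟩ := hM.insert hab haM hbM
      have := hnG _ (Finset.insert_subset_insert _ hMH) g1
      omega
    obtain ⟨c, hbc, -⟩ := hM.mate hbM
    have hac := triangle hnG hBG (hMH.trans hHG) (hNH.trans hHG) hM hN hMc hNc haM hbN hfG hab hbc
    have hcM := (mem_cov_of hbc).2
    obtain ⟨N', hNH', hN', hNc', hcN'⟩ := hmissX c (hXS C H hS c (cov_mono hMH hcM))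
    have := triangle hnG hBG (hMH.trans hHG) (hNH'.trans hHG) hM hN' hMc hNc' haM hcN'
      (hHG (hNH hac)) (fun h => haM (h ▸ hcM)) (by rwa [Sym2.eq_swap] : s(c, b) ∈ M)
    exact hfH (hNH' this)
  obtain ⟨A, hA⟩ : ∃ A, A ∉ C := by
    by_contra! h
    have := Finset.card_le_card (show Finset.univ ⊆ C from fun i _ => h i)
    rw [Finset.card_univ] at this
    omega
  have hAH := hclaim C A hS hA
  obtain ⟨f, hf⟩ := hne A
  obtain ⟨e, he, hHe⟩ := hS
  have hfH := hAH hf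
  rw [hHe] at hfH
  obtain ⟨c, hc, hcf⟩ := Finset.mem_image.1 hfH
  have hAc : A ≠ c := fun h => hA (h ▸ hc)
  have hS1 : Sel E (C.erase c) ((C.erase c).image e) :=
    ⟨e, fun d hd => he d (Finset.mem_of_mem_erase hd), rfl⟩
  have hS2 := hS1.add (c := A) (fun h => hA (Finset.mem_of_mem_erase h)) hf
  have hHH : insert f ((C.erase c).image e) = H := by
    rw [hHe, ← hcf, ← Finset.image_insert, Finset.insert_erase hc]
  rw [hHH] at hS2
  have hcH := hclaim _ c hS2 (by simp [hAc.symm])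
  obtain ⟨N, h1, h2, h3⟩ := hnu A c hAc
  have := hNR _ _ hS2 N (h1.trans (Finset.union_subset hAH hcH)) h2
  omega

end RainbowHelpers

/-- Let `k ≥ 2` and let `E₁, …, E_{3k-2}` be non-empty edge subsets of a graph such that
`ν(E_i ∪ E_j) ≥ k` for every `i ≠ j`.  Then `⋃ E_i` contains a rainbow matching of size `k`:
a matching `e₁, …, e_k` with `e_t ∈ E_{i_t}` for pairwise distinct indices `i₁, …, i_k`. -/
theorem rainbow_matching_general {V : Type} [DecidableEq V] (k : ℕ) (hk : 2 ≤ k)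
    (E : Fin (3 * k - 2) → Finset (Sym2 V))
    (hne : ∀ i, (E i).Nonempty)
    (hsimple : ∀ i, ∀ e ∈ E i, ¬ e.IsDiag)
    (hnu : ∀ i j, i ≠ j → k ≤ nu (E i ∪ E j)) :
    ∃ (f : Fin k → Sym2 V) (ι : Fin k → Fin (3 * k - 2)),
      Function.Injective f ∧ Function.Injective ι ∧
      (∀ t, f t ∈ E (ι t)) ∧
      IsMatching (Finset.image f Finset.univ) := by
  have hnu' : ∀ i j, i ≠ j → ∃ N ⊆ E i ∪ E j, IsMatching N ∧ k ≤ N.card := by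
    intro i j hij
    have h := hnu i j hij
    unfold nu at h
    obtain ⟨N, hN, hNc⟩ := (Finset.le_sup_iff (by rw [bot_eq_zero']; omega)).1 h
    rw [Finset.mem_filter, Finset.mem_powerset] at hN
    refine ⟨N, fun e he => ?_, hN.2, hNc⟩
    have := hN.1 he
    simpa using this
  obtain ⟨C, M, ⟨e, he, rfl⟩, hM, hMc, hCc⟩ :=
    rainbow_aux E hne hsimple k (by rw [Fintype.card_fin]; omega) (by convert hnu')
  have hinj : Set.InjOn e C := Finset.card_image_iff.1 (by convert hMc.trans hCc.symm)
  let g : Fin k ≃ C := (Fintype.equivFinOfCardEq (by simpa using hCc)).symm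
  refine ⟨fun t => e (g t), fun t => g t, ?_, ?_, fun t => he _ (g t).2, ?_⟩
  · intro s t hst
    exact g.injective (Subtype.ext (hinj (g s).2 (g t).2 hst))
  · intro s t hst
    exact g.injective (Subtype.ext hst)
  · refine hM.mono fun f hf => ?_
    obtain ⟨t, -, rfl⟩ := Finset.mem_image.1 hf
    exact @Finset.mem_image_of_mem _ _ (_) C e _ (g t).2
end

section
/- Let k ≥ 2 and let E₁, …, E_{2k-1} be non-empty edge subsets of a bipartite graph such that ν(E_i ∪ E_j) ≥ k for every i ≠ j. Then E = ⋃ E_i contains a rainbow matching of size k. -/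
attribute [local instance] Classical.propDecidable

/-- Rotations of the matching `(a, b)`: same right ends, distinct colours in `D ∪ range c`. -/
def Rot {V I : Type} {m : ℕ} (G : I → V → V → Prop) (b : Fin m → V)
    (a' : Fin m → V) (c' : Fin m → I) : Prop :=
  Function.Injective a' ∧ Function.Injective c' ∧ ∀ t, G (c' t) (a' t) (b t)

/-- A rainbow matching of size `m` exists. -/
def RM {V I : Type} (G : I → V → V → Prop) (m : ℕ) : Prop :=
  ∃ (a b : Fin m → V) (c : Fin m → I), Function.Injective b ∧ Rot G b a c

theorem rot_update {V I : Type} {m : ℕ} {G : I → V → V → Prop} {b : Fin m → V}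
    {a : Fin m → V} {c : Fin m → I} (h : Rot G b a c) (y : Fin m) (p : V) (i : I)
    (hp : ∀ t, a t ≠ p) (hi : ∀ t, c t ≠ i) (hG : G i p (b y)) :
    Rot G b (Function.update a y p) (Function.update c y i) := by
  obtain ⟨h1, h2, h3⟩ := h
  refine ⟨?_, ?_, ?_⟩
  · intro s t hst
    simp only [Function.update_apply] at hst
    split_ifs at hst with u v v
    · rw [u, v]
    · exact absurd hst.symm (hp _)
    · exact absurd hst (hp _)
    · exact h1 hst
  · intro s t hst
    simp only [Function.update_apply] at hst
    split_ifs at hst with u v v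
    · rw [u, v]
    · exact absurd hst.symm (hi _)
    · exact absurd hst (hi _)
    · exact h2 hst
  · intro t
    simp only [Function.update_apply]
    split_ifs with u
    · rw [u]; exact hG
    · exact h3 t

theorem cons_inj {X : Type} {m : ℕ} {a : Fin m → X} (h : Function.Injective a) (p : X)
    (hp : ∀ t, a t ≠ p) : Function.Injective (Fin.cons p a : Fin (m + 1) → X) := by
  rw [Fin.cons_injective_iff]
  exact ⟨fun ⟨t, ht⟩ => hp t ht, h⟩

theorem rm_succ {V I : Type} {m : ℕ} {G : I → V → V → Prop} {b : Fin m → V}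
    {a : Fin m → V} {c : Fin m → I} (hb : Function.Injective b) (h : Rot G b a c)
    (p q : V) (i : I)
    (hp : ∀ t, a t ≠ p) (hq : ∀ t, b t ≠ q) (hi : ∀ t, c t ≠ i) (hG : G i p q) :
    RM G (m + 1) := by
  obtain ⟨h1, h2, h3⟩ := h
  refine ⟨Fin.cons p a, Fin.cons q b, Fin.cons i c, cons_inj hb q hq, cons_inj h1 p hp,
    cons_inj h2 i hi, ?_⟩
  intro t
  refine Fin.cases ?_ ?_ t
  · simpa using hG
  · intro t; simpa using h3 t

theorem greedy {V I : Type} [Fintype I] {m n : ℕ} {G : I → V → V → Prop}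
    (hm : m < n) (hI : Fintype.card I = 2 * n - 1)
    (H : ∀ i j, i ≠ j → ∀ S T : Finset V, S.card + T.card < n →
      ∃ p q, (G i p q ∨ G j p q) ∧ p ∉ S ∧ q ∉ T)
    {a b : Fin m → V} {c : Fin m → I} (hb : Function.Injective b) (h : Rot G b a c)
    (hno : ¬ RM G (m + 1)) (r : ℕ) (hr : r ≤ m) :
    ∃ (R : Finset (Fin m)) (D : Finset I), R.card = r ∧ D.card ≤ r ∧
      ∀ p, (∀ t, t ∉ R → a t ≠ p) → ∃ a' c', Rot G b a' c' ∧ (∀ t, a' t ≠ p) ∧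
        (∀ t, t ∉ R → a' t = a t) ∧ ∀ t, c' t ∈ D ∪ Finset.univ.image c := by
  induction r with
  | zero =>
    refine ⟨∅, ∅, rfl, le_rfl, fun p hp => ⟨a, c, h, fun t => hp t (by simp), fun _ _ => rfl, ?_⟩⟩
    intro t; simp
  | succ r ih =>
    obtain ⟨R, D, hR, hD, hrot⟩ := ih (by omega)
    set U := D ∪ Finset.univ.image c with hU
    have hUc : U.card ≤ r + m := by
      refine (Finset.card_union_le _ _).trans (add_le_add hD ?_)
      exact Finset.card_image_le.trans (by simp)
    have hcompl : 1 < Uᶜ.card := by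
      rw [Finset.card_compl, hI]; omega
    obtain ⟨i, hi, j, hj, hij⟩ := Finset.one_lt_card.1 hcompl
    have hcard : (Rᶜ.image a).card + (R.image b).card < n := by
      have h1 : (Rᶜ.image a).card ≤ Rᶜ.card := Finset.card_image_le
      have h2 : (R.image b).card ≤ R.card := Finset.card_image_le
      rw [Finset.card_compl, Fintype.card_fin] at h1
      omega
    obtain ⟨p, q, hG, hp, hq⟩ := H i j hij _ _ hcard
    obtain ⟨l, hl, hGl⟩ : ∃ l, l ∉ U ∧ G l p q := by
      rcases hG with hG | hG
      · exact ⟨i, Finset.mem_compl.1 hi, hG⟩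
      · exact ⟨j, Finset.mem_compl.1 hj, hG⟩
    have hp' : ∀ t, t ∉ R → a t ≠ p := by
      intro t ht hc
      exact hp (Finset.mem_image.2 ⟨t, Finset.mem_compl.2 ht, hc⟩)
    obtain ⟨a', c', hr1, hr2, hr3, hr4⟩ := hrot p hp'
    have hlc : ∀ t, c' t ≠ l := fun t ht => hl (ht ▸ hr4 t)
    by_cases hqb : ∀ t, b t ≠ q
    · exact absurd (rm_succ hb hr1 p q l hr2 hqb hlc hGl) hno
    push Not at hqb
    obtain ⟨y, rfl⟩ := hqb
    have hy : y ∉ R := fun hy => hq (Finset.mem_image_of_mem _ hy)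
    refine ⟨insert y R, insert l D, ?_, ?_, ?_⟩
    · rw [Finset.card_insert_of_notMem hy, hR]
    · exact (Finset.card_insert_le _ _).trans (by omega)
    intro p' hp2
    by_cases hpy : a y = p'
    · subst hpy
      refine ⟨_, _, rot_update hr1 y p l hr2 hlc hGl, ?_, ?_, ?_⟩
      · intro t
        simp only [Function.update_apply]
        split_ifs with u
        · exact (hp' y hy).symm
        · rw [← hr3 y hy]
          exact fun e => u (hr1.1 e)
      · intro t ht
        rw [Finset.mem_insert, not_or] at ht
        rw [Function.update_of_ne ht.1]
        exact hr3 t ht.2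
      · intro t
        simp only [Function.update_apply]
        split_ifs with u
        · simp
        · have := hr4 t
          rw [Finset.insert_union]
          exact Finset.mem_insert_of_mem this
    · obtain ⟨a2, c2, g1, g2, g3, g4⟩ := hrot p' (by
        intro t ht
        by_cases e : t = y
        · rw [e]; exact hpy
        · exact hp2 t (by simp [e, ht]))
      refine ⟨a2, c2, g1, g2, fun t ht => g3 t (fun e => ht (Finset.mem_insert_of_mem e)), ?_⟩
      intro t
      rw [Finset.insert_union]
      exact Finset.mem_insert_of_mem (g4 t)

theorem stuck {V I : Type} [Fintype I] {m n : ℕ} {G : I → V → V → Prop}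
    (hm : m < n) (hI : Fintype.card I = 2 * n - 1) (hne : ∀ i, ∃ p q, G i p q)
    (H : ∀ i j, i ≠ j → ∀ S T : Finset V, S.card + T.card < n →
      ∃ p q, (G i p q ∨ G j p q) ∧ p ∉ S ∧ q ∉ T)
    {a b : Fin m → V} {c : Fin m → I} (hb : Function.Injective b) (h : Rot G b a c)
    (hno : ¬ RM G (m + 1)) :
    ∃ z, (∀ t, c t ≠ z) ∧ (∀ p q, G z p q → ∃ t, b t = q) ∧
      ∃ a' c', Rot G b a' c' ∧ ∃ y, c' y = z := by
  obtain ⟨R, D, hR, hD, hrot⟩ := greedy hm hI H hb h hno m le_rfl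
  have hRu : R = Finset.univ := by
    rw [← Finset.card_eq_iff_eq_univ, hR, Fintype.card_fin]
  have hUc : (D ∪ Finset.univ.image c).card ≤ m + m := by
    refine (Finset.card_union_le _ _).trans (add_le_add hD ?_)
    exact Finset.card_image_le.trans (by simp)
  have hcompl : 0 < (D ∪ Finset.univ.image c)ᶜ.card := by
    rw [Finset.card_compl, hI]; omega
  obtain ⟨z, hz⟩ := Finset.card_pos.1 hcompl
  rw [Finset.mem_compl] at hz
  have key : ∀ p, ∃ a' c', Rot G b a' c' ∧ (∀ t, a' t ≠ p) ∧ ∀ t, c' t ≠ z := by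
    intro p
    obtain ⟨a', c', h1, h2, -, h4⟩ := hrot p (by simp [hRu])
    exact ⟨a', c', h1, h2, fun t ht => hz (ht ▸ h4 t)⟩
  have hzb : ∀ p q, G z p q → ∃ t, b t = q := by
    intro p q hG
    by_contra hq
    push Not at hq
    obtain ⟨a', c', h1, h2, h3⟩ := key p
    exact hno (rm_succ hb h1 p q z h2 hq h3 hG)
  refine ⟨z, ?_, hzb, ?_⟩
  · rintro t rfl
    exact hz (by simp)
  · obtain ⟨p, q, hG⟩ := hne z
    obtain ⟨y, rfl⟩ := hzb p q hG
    obtain ⟨a', c', h1, h2, h3⟩ := key p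
    exact ⟨_, _, rot_update h1 y p z h2 h3 hG, y, by simp⟩

theorem rm_all {V I : Type} [Fintype I] {n : ℕ} {G : I → V → V → Prop}
    (hI : Fintype.card I = 2 * n - 1) (hne : ∀ i, ∃ p q, G i p q)
    (H : ∀ i j, i ≠ j → ∀ S T : Finset V, S.card + T.card < n →
      ∃ p q, (G i p q ∨ G j p q) ∧ p ∉ S ∧ q ∉ T) (m : ℕ) (hm : m ≤ n) : RM G m := by
  induction m with
  | zero =>
    exact ⟨Fin.elim0, Fin.elim0, Fin.elim0, fun x => x.elim0, fun x => x.elim0,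
      fun x => x.elim0, fun x => x.elim0⟩
  | succ m ih =>
    obtain ⟨a, b, c, hb, h⟩ := ih (by omega)
    by_contra hno
    obtain ⟨z, -, hz, a', c', h', y, hy⟩ := stuck (by omega) hI hne H hb h hno
    obtain ⟨w, hw1, hw, -⟩ := stuck (by omega) hI hne H hb h' hno
    have hzw : z ≠ w := fun e => hw1 y (hy.trans e)
    have hc : (Finset.univ.image b).card ≤ m := Finset.card_image_le.trans (by simp)
    obtain ⟨p, q, hG, -, hq⟩ := H z w hzw ∅ (Finset.univ.image b) (by
      rw [Finset.card_empty]; omega)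
    apply hq
    rcases hG with hG | hG
    · obtain ⟨t, rfl⟩ := hz p q hG; simp
    · obtain ⟨t, rfl⟩ := hw p q hG; simp

theorem nu_cover {V : Type} {n : ℕ} (E : Finset (Sym2 V)) (h : n ≤ nu E) (hn : 0 < n)
    (S : Finset V) (hS : S.card < n) : ∃ e ∈ E, ∀ v ∈ e, v ∉ S := by
  by_contra hcon
  push Not at hcon
  have : nu E ≤ S.card := by
    refine Finset.sup_le ?_
    intro M hM
    rw [Finset.mem_filter, Finset.mem_powerset] at hM
    obtain ⟨hME, -, hM⟩ := hM
    have hch : ∀ e : Sym2 V, ∃ v, e ∈ M → v ∈ e ∧ v ∈ S := by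
      intro e
      by_cases he : e ∈ M
      · obtain ⟨v, h1, h2⟩ := hcon e (hME he)
        exact ⟨v, fun _ => ⟨h1, h2⟩⟩
      · exact ⟨e.out.1, fun h => absurd h he⟩
    choose g hg using hch
    refine Finset.card_le_card_of_injOn g (fun e he => (hg e he).2) ?_
    intro e he f hf hef
    by_contra hne
    exact hM e he f hf hne (g e) (hg e he).1 (hef ▸ (hg f hf).1)
  omega

/-- Let `k ≥ 2` and let `E₁, …, E_{2k-1}` be non-empty edge subsets of a bipartite graph
(with bipartition given by `side`) such that `ν(E_i ∪ E_j) ≥ k` for every `i ≠ j`.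
Then `⋃ E_i` contains a rainbow matching of size `k`. -/
theorem rainbow_matching_bipartite {V : Type} [DecidableEq V] (k : ℕ) (hk : 2 ≤ k)
    (side : V → Bool)
    (E : Fin (2 * k - 1) → Finset (Sym2 V))
    (hne : ∀ i, (E i).Nonempty)
    (hbip : ∀ i, ∀ e ∈ E i, ∃ x y, e = s(x, y) ∧ side x ≠ side y)
    (hnu : ∀ i j, i ≠ j → k ≤ nu (E i ∪ E j)) :
    ∃ (f : Fin k → Sym2 V) (ι : Fin k → Fin (2 * k - 1)),
      Function.Injective f ∧ Function.Injective ι ∧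
      (∀ t, f t ∈ E (ι t)) ∧
      IsMatching (Finset.image f Finset.univ) := by
  set G : Fin (2 * k - 1) → V → V → Prop :=
    fun i p q => s(p, q) ∈ E i ∧ side p = true ∧ side q = false with hGdef
  have orient : ∀ i, ∀ e ∈ E i, ∃ p q, e = s(p, q) ∧ G i p q := by
    intro i e he
    obtain ⟨x, y, rfl, hxy⟩ := hbip i e he
    cases hx : side x
    · refine ⟨y, x, Sym2.eq_swap, ?_, ?_, hx⟩
      · rw [Sym2.eq_swap]; exact he
      · cases hy : side y
        · exact absurd (hx.trans hy.symm) hxy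
        · rfl
    · refine ⟨x, y, rfl, he, hx, ?_⟩
      cases hy : side y
      · rfl
      · exact absurd (hx.trans hy.symm) hxy
  have hrm : RM G k := by
    refine rm_all (n := k) (by simp) ?_ ?_ k le_rfl
    · intro i
      obtain ⟨e, he⟩ := hne i
      obtain ⟨p, q, -, h⟩ := orient i e he
      exact ⟨p, q, h⟩
    · intro i j hij S T hST
      have hn := hnu i j hij
      obtain ⟨e, he, hv⟩ := nu_cover _ hn (by omega) (S ∪ T)
        (lt_of_le_of_lt (Finset.card_union_le _ _) hST)
      have : ∃ p q, e = s(p, q) ∧ (G i p q ∨ G j p q) := by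
        rcases Finset.mem_union.1 he with he | he
        · obtain ⟨p, q, h1, h2⟩ := orient i e he
          exact ⟨p, q, h1, Or.inl h2⟩
        · obtain ⟨p, q, h1, h2⟩ := orient j e he
          exact ⟨p, q, h1, Or.inr h2⟩
      obtain ⟨p, q, rfl, h⟩ := this
      refine ⟨p, q, h, ?_, ?_⟩
      · exact fun hp => hv p (by simp) (Finset.mem_union_left _ hp)
      · exact fun hq => hv q (by simp) (Finset.mem_union_right _ hq)
  obtain ⟨a, b, c, hb, ha, hc, hG⟩ := hrm
  have hab : ∀ s t, a s ≠ b t := by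
    intro s t e
    have h1 := (hG s).2.1
    have h2 := (hG t).2.2
    rw [e, h2] at h1
    exact absurd h1 (by simp)
  refine ⟨fun t => s(a t, b t), c, ?_, hc, fun t => (hG t).1, ?_, ?_⟩
  · intro s t hst
    rcases Sym2.eq_iff.1 hst with h | h
    · exact ha h.1
    · exact absurd h.1 (hab _ _)
  · intro e he
    obtain ⟨t, -, rfl⟩ := Finset.mem_image.1 he
    rw [Sym2.mk_isDiag_iff]
    exact hab t t
  · intro e he f hf hef v hve hvf
    obtain ⟨s, -, rfl⟩ := Finset.mem_image.1 he
    obtain ⟨t, -, rfl⟩ := Finset.mem_image.1 hf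
    have hst : s ≠ t := fun h => hef (by rw [h])
    rcases Sym2.mem_iff.1 hve with h | h <;> rcases Sym2.mem_iff.1 hvf with h' | h'
    · exact hst (ha (h.symm.trans h'))
    · exact hab _ _ (h.symm.trans h')
    · exact hab _ _ (h'.symm.trans h)
    · exact hst (hb (h.symm.trans h'))
end
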